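/- Let A ∈ ℝ^{I_1×⋯×I_D} and let 0 < ε. Define Â_0 = A and, for d = 1,…,D, let U_d ∈ ℝ^{I_d×S_d} be a matrix whose columns are leading left singular vectors (corresponding to the S_d largest singular values) of the mode-d matricization of Â_{d−1}, and set Â_d = Â_{d−1} ×_d (U_d U_d^T). Let σ_d(i) denote the i-th largest singular value of the mode-d matricization of Â_{d−1}. If at each step d the truncation ranks S_d are chosen so that the discarded singular values satisfy Σ_{i=S_d+1}^{I_d} σ_d(i)² ≤ ε²‖A‖_F²/D, then the computed approximation B = Â_D satisfies ‖A − B‖_F ≤ ε‖A‖_F. -/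

import Mathlib

/-!
Write `P_d = U_d U_dᵀ` acting on mode `d`. Each `P_d` is an orthogonal projection of the space of
tensors, and projections acting on different modes commute. Hence `Â_k` lies in the intersection of
the ranges of `P_1, …, P_k`, and `A - Â_k` is orthogonal to that intersection
(both by induction on `k`), so Pythagoras gives `‖A - Â_D‖² = ‖A‖² - ‖Â_D‖²`. This telescopes into
`Σ_d (‖Â_{d-1}‖² - ‖P_d Â_{d-1}‖²)`. Pairing a tensor with its mode product is a trace against the
Gram matrix of the matricization (`tdot_modeProdSq`), so the `d`-th summand is exactly the sum of
the discarded `σ_d(i)²` (`frobSq_sub_truncation`), which is at most `ε²‖A‖²/D`.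
-/

open scoped Matrix Kronecker

variable {D : ℕ}

/-- mode-`d` matricization of a tensor (columns indexed by the remaining indices). -/
def matricization (I : Fin D → ℕ) (A : (∀ d, Fin (I d)) → ℝ) (d : Fin D) :
    Matrix (Fin (I d)) ((k : {k : Fin D // k ≠ d}) → Fin (I k.1)) ℝ :=
  Matrix.of fun i j =>
    A fun k => if h : k = d then Fin.cast (congrArg I h.symm) i else j ⟨k, h⟩

/-- The `d`-mode product of a tensor with a square matrix `P ∈ ℝ^{I_d×I_d}`. -/
def modeProdSq (I : Fin D → ℕ) (A : (∀ d, Fin (I d)) → ℝ) (d : Fin D)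
    (P : Matrix (Fin (I d)) (Fin (I d)) ℝ) : (∀ d, Fin (I d)) → ℝ :=
  fun i => ∑ j : Fin (I d), P (i d) j * A (Function.update i d j)

/-- Squared Frobenius norm of a tensor. -/
def frobSq (I : Fin D → ℕ) (A : (∀ d, Fin (I d)) → ℝ) : ℝ :=
  ∑ i : ∀ d, Fin (I d), (A i) ^ 2

/-- The Frobenius inner product of two tensors. -/
def tdot (I : Fin D → ℕ) (X Y : (∀ d, Fin (I d)) → ℝ) : ℝ :=
  ∑ i : ∀ d, Fin (I d), X i * Y i

theorem frobSq_eq_tdot (I : Fin D → ℕ) (X : (∀ d, Fin (I d)) → ℝ) :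
    frobSq I X = tdot I X X := by
  simp [frobSq, tdot, sq]

theorem frobSq_nonneg (I : Fin D → ℕ) (X : (∀ d, Fin (I d)) → ℝ) : 0 ≤ frobSq I X :=
  Finset.sum_nonneg fun _ _ => sq_nonneg _

theorem tdot_sub_left (I : Fin D → ℕ) (X Y Z : (∀ d, Fin (I d)) → ℝ) :
    tdot I (fun i => X i - Y i) Z = tdot I X Z - tdot I Y Z := by
  simp [tdot, sub_mul, Finset.sum_sub_distrib]

theorem tdot_comm (I : Fin D → ℕ) (X Y : (∀ d, Fin (I d)) → ℝ) :
    tdot I X Y = tdot I Y X := by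
  simp [tdot, mul_comm]

theorem matricization_apply (I : Fin D → ℕ) (X : (∀ d, Fin (I d)) → ℝ) (d : Fin D)
    (a : Fin (I d)) (c : (k : {k : Fin D // k ≠ d}) → Fin (I k.1)) :
    matricization I X d a c = X ((Equiv.piSplitAt d fun k => Fin (I k)).symm (a, c)) := by
  simp only [matricization, Matrix.of_apply, Equiv.piSplitAt_symm_apply]
  congr 1
  funext k
  by_cases h : k = d
  · subst h
    simp
  · simp [h]

/-- The pairing of a tensor with a mode product, as a trace involving the cross-Gram matrix of the
matricizations. -/
theorem tdot_modeProdSq (I : Fin D → ℕ) (X Y : (∀ d, Fin (I d)) → ℝ) (d : Fin D)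
    (P : Matrix (Fin (I d)) (Fin (I d)) ℝ) :
    tdot I Y (modeProdSq I X d P) =
      (P * (matricization I X d * (matricization I Y d)ᵀ)).trace := by
  have hupd : ∀ (a b : Fin (I d)) (c : (k : {k : Fin D // k ≠ d}) → Fin (I k.1)),
      Function.update ((Equiv.piSplitAt d fun k => Fin (I k)).symm (a, c)) d b =
        (Equiv.piSplitAt d fun k => Fin (I k)).symm (b, c) := by
    intro a b c
    funext k
    by_cases h : k = d
    · subst h
      simp
    · simp [h]
  have hat : ∀ (a : Fin (I d)) (c : (k : {k : Fin D // k ≠ d}) → Fin (I k.1)),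
      (Equiv.piSplitAt d fun k => Fin (I k)).symm (a, c) d = a := by
    intro a c
    simp
  unfold tdot modeProdSq
  rw [← (Equiv.piSplitAt d fun k => Fin (I k)).symm.sum_comp, Fintype.sum_prod_type]
  simp only [Matrix.trace, Matrix.diag_apply, Matrix.mul_apply, Matrix.transpose_apply,
    matricization_apply, hupd, hat, Finset.mul_sum]
  refine Finset.sum_congr rfl fun a _ => ?_
  rw [Finset.sum_comm]
  refine Finset.sum_congr rfl fun b _ => Finset.sum_congr rfl fun c _ => ?_
  ring

theorem modeProdSq_one (I : Fin D → ℕ) (X : (∀ d, Fin (I d)) → ℝ) (d : Fin D) :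
    modeProdSq I X d 1 = X := by
  funext i
  simp [modeProdSq, Matrix.one_apply]

theorem modeProdSq_modeProdSq (I : Fin D → ℕ) (X : (∀ d, Fin (I d)) → ℝ) (d : Fin D)
    (P Q : Matrix (Fin (I d)) (Fin (I d)) ℝ) :
    modeProdSq I (modeProdSq I X d P) d Q = modeProdSq I X d (Q * P) := by
  funext i
  simp only [modeProdSq, Function.update_self, Function.update_idem, Matrix.mul_apply,
    Finset.mul_sum, Finset.sum_mul]
  rw [Finset.sum_comm]
  simp only [mul_assoc]

theorem modeProdSq_comm (I : Fin D → ℕ) (X : (∀ d, Fin (I d)) → ℝ) {d e : Fin D} (hde : d ≠ e)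
    (P : Matrix (Fin (I d)) (Fin (I d)) ℝ) (Q : Matrix (Fin (I e)) (Fin (I e)) ℝ) :
    modeProdSq I (modeProdSq I X d P) e Q = modeProdSq I (modeProdSq I X e Q) d P := by
  funext i
  simp only [modeProdSq, Function.update_of_ne hde, Function.update_of_ne hde.symm,
    Finset.mul_sum]
  rw [Finset.sum_comm]
  refine Finset.sum_congr rfl fun a _ => Finset.sum_congr rfl fun b _ => ?_
  rw [Function.update_comm hde]
  ring

theorem tdot_modeProdSq_symm (I : Fin D → ℕ) (X Y : (∀ d, Fin (I d)) → ℝ) (d : Fin D)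
    {P : Matrix (Fin (I d)) (Fin (I d)) ℝ} (hP : Pᵀ = P) :
    tdot I (modeProdSq I X d P) Y = tdot I X (modeProdSq I Y d P) := by
  rw [tdot_comm, tdot_modeProdSq, tdot_modeProdSq, ← Matrix.trace_transpose, Matrix.transpose_mul,
    Matrix.transpose_mul, Matrix.transpose_transpose, hP, Matrix.trace_mul_comm]

/-- The projection onto the span of the leading `s` columns of `V` is diagonalized by `V`. -/
theorem leading_mul_transpose {n s : ℕ} (hs : s ≤ n) (V : Matrix (Fin n) (Fin n) ℝ)
    (W : Matrix (Fin n) (Fin s) ℝ) (hW : ∀ i j, W i j = V i (Fin.castLE hs j)) :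
    W * Wᵀ = V * Matrix.diagonal (fun i : Fin n => if s ≤ (i : ℕ) then (0 : ℝ) else 1) * Vᵀ := by
  ext a b
  rw [Matrix.mul_apply, Matrix.mul_apply]
  simp only [Matrix.mul_diagonal, Matrix.transpose_apply, hW]
  refine Finset.sum_of_injOn (Fin.castLE hs) (Fin.castLE_injective hs).injOn (by simp) ?_ ?_
  · intro i _ hi
    have : s ≤ (i : ℕ) := by
      by_contra h
      exact hi ⟨⟨i, by omega⟩, by simp, by ext; simp⟩
    simp [this]
  · intro j _
    have : ¬ s ≤ (j : ℕ) := by omega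
    simp [this]

theorem leading_idem {n s : ℕ} (hs : s ≤ n) (V : Matrix (Fin n) (Fin n) ℝ) (hV : Vᵀ * V = 1)
    (W : Matrix (Fin n) (Fin s) ℝ) (hW : ∀ i j, W i j = V i (Fin.castLE hs j)) :
    (W * Wᵀ) * (W * Wᵀ) = W * Wᵀ := by
  have h1 : Wᵀ * W = 1 := by
    ext a b
    have h := congrFun (congrFun hV (Fin.castLE hs a)) (Fin.castLE hs b)
    simp only [Matrix.mul_apply, Matrix.transpose_apply, Matrix.one_apply,
      (Fin.castLE_injective hs).eq_iff] at h
    simpa only [Matrix.mul_apply, Matrix.transpose_apply, Matrix.one_apply, hW] using h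
  rw [Matrix.mul_assoc, ← Matrix.mul_assoc Wᵀ, h1, Matrix.one_mul]

/-- Truncating one mode decreases the squared norm by exactly the discarded squared singular
values. -/
theorem frobSq_sub_truncation (I : Fin D → ℕ) (X : (∀ d, Fin (I d)) → ℝ) (d : Fin D) {s : ℕ}
    (hs : s ≤ I d) (V : Matrix (Fin (I d)) (Fin (I d)) ℝ) (hV : Vᵀ * V = 1)
    (τ : Fin (I d) → ℝ)
    (hgram : matricization I X d * (matricization I X d)ᵀ =
      V * Matrix.diagonal (fun i => τ i ^ 2) * Vᵀ)
    (W : Matrix (Fin (I d)) (Fin s) ℝ) (hW : ∀ i j, W i j = V i (Fin.castLE hs j)) :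
    frobSq I X - frobSq I (modeProdSq I X d (W * Wᵀ)) =
      ∑ i ∈ Finset.univ.filter fun i : Fin (I d) => s ≤ (i : ℕ), τ i ^ 2 := by
  have hsym : (W * Wᵀ)ᵀ = W * Wᵀ := by simp
  -- the trace of a product of two matrices diagonalized by `V`
  have htr : ∀ c : Fin (I d) → ℝ,
      (V * Matrix.diagonal c * Vᵀ * (V * Matrix.diagonal (fun i => τ i ^ 2) * Vᵀ)).trace =
        ∑ i, c i * τ i ^ 2 := by
    intro c
    have : V * Matrix.diagonal c * Vᵀ * (V * Matrix.diagonal (fun i => τ i ^ 2) * Vᵀ) =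
        V * (Matrix.diagonal (fun i => c i * τ i ^ 2) * Vᵀ) := by
      rw [← Matrix.diagonal_mul_diagonal]
      simp only [Matrix.mul_assoc]
      rw [← Matrix.mul_assoc Vᵀ V, hV, Matrix.one_mul]
    rw [this, Matrix.trace_mul_comm, Matrix.mul_assoc, hV, Matrix.mul_one, Matrix.trace_diagonal]
  have hX : frobSq I X = ∑ i, τ i ^ 2 := by
    have h := tdot_modeProdSq I X X d 1
    rw [modeProdSq_one, ← frobSq_eq_tdot, hgram, Matrix.one_mul, Matrix.trace_mul_comm,
      ← Matrix.mul_assoc, hV, Matrix.one_mul, Matrix.trace_diagonal] at h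
    exact h
  rw [frobSq_eq_tdot I (modeProdSq I X d _), tdot_modeProdSq_symm I _ _ d hsym,
    modeProdSq_modeProdSq, leading_idem hs V hV W hW, tdot_modeProdSq, hgram,
    leading_mul_transpose hs V W hW, htr, hX, ← Finset.sum_sub_distrib, Finset.sum_filter]
  refine Finset.sum_congr rfl fun i _ => ?_
  split_ifs <;> simp

/-- If at each step of the sequentially truncated HOSVD the discarded
singular values satisfy `Σ_{i=S_d+1}^{I_d} σ_d(i)² ≤ ε²‖A‖_F²/D`, then the computed
approximation `B = Â_D` satisfies `‖A − B‖_F ≤ ε‖A‖_F`. -/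
theorem sthosvd_relative_error (ε : ℝ) (hε : 0 < ε)
    (I : Fin D → ℕ) (A : (∀ d, Fin (I d)) → ℝ)
    -- the truncation ranks
    (Sr : Fin D → ℕ) (hSr : ∀ d, Sr d ≤ I d)
    -- the sequence of partially truncated tensors `Â₀ = A, …, Â_D`
    (Ahat : Fin (D + 1) → (∀ d, Fin (I d)) → ℝ)
    -- full sets of left singular vectors and singular values of the mode-`d`
    -- matricization `M_d` of `Â_{d-1}`: `Ufull d` is orthogonal, `σ d` is a
    -- nonincreasing nonnegative vector and `M_d M_dᵀ = Ufull d diag(σ d ²) (Ufull d)ᵀ`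
    (Ufull : ∀ d : Fin D, Matrix (Fin (I d)) (Fin (I d)) ℝ)
    (σ : ∀ d : Fin D, Fin (I d) → ℝ)
    (hUorth : ∀ d : Fin D, (Ufull d)ᵀ * Ufull d = 1)
    (hσnonneg : ∀ (d : Fin D) (i : Fin (I d)), 0 ≤ σ d i)
    (hσmono : ∀ (d : Fin D) (i j : Fin (I d)), i ≤ j → σ d j ≤ σ d i)
    (hgram : ∀ d : Fin D,
      matricization I (Ahat d.castSucc) d * (matricization I (Ahat d.castSucc) d)ᵀ =
        Ufull d * Matrix.diagonal (fun i => σ d i ^ 2) * (Ufull d)ᵀ)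
    -- `U d` consists of the leading `Sr d` left singular vectors
    (U : ∀ d : Fin D, Matrix (Fin (I d)) (Fin (Sr d)) ℝ)
    (hU : ∀ (d : Fin D) (i : Fin (I d)) (j : Fin (Sr d)),
      U d i j = Ufull d i (Fin.castLE (hSr d) j))
    -- the sequential truncation recursion `Â_d = Â_{d-1} ×_d (U_d U_dᵀ)`
    (hA0 : Ahat 0 = A)
    (hstep : ∀ d : Fin D,
      Ahat d.succ = modeProdSq I (Ahat d.castSucc) d (U d * (U d)ᵀ))
    (htrunc : ∀ d : Fin D,
      (∑ i ∈ Finset.univ.filter fun i : Fin (I d) => Sr d ≤ (i : ℕ), σ d i ^ 2) ≤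
        ε ^ 2 * frobSq I A / D) :
    Real.sqrt (frobSq I (fun i => A i - Ahat (Fin.last D) i)) ≤
      ε * Real.sqrt (frobSq I A) := by
  have hsym : ∀ d, (U d * (U d)ᵀ)ᵀ = U d * (U d)ᵀ := fun d => by simp
  have hidem : ∀ d, (U d * (U d)ᵀ) * (U d * (U d)ᵀ) = U d * (U d)ᵀ := fun d =>
    leading_idem (hSr d) (Ufull d) (hUorth d) (U d) (hU d)
  have hrange : ∀ k : Fin (D + 1), ∀ j : Fin D, j.castSucc < k →
      modeProdSq I (Ahat k) j (U j * (U j)ᵀ) = Ahat k := by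
    intro k
    induction k using Fin.induction with
    | zero => intro j hj; exact absurd hj (Fin.not_lt_zero _)
    | succ d ih =>
      intro j hj
      rw [hstep]
      by_cases hjd : j = d
      · subst hjd
        rw [modeProdSq_modeProdSq, hidem]
      · have hlt : j.castSucc < d.castSucc := by
          rw [Fin.lt_def] at hj ⊢
          have := Fin.val_ne_of_ne hjd
          simp only [Fin.val_castSucc, Fin.val_succ] at hj ⊢
          omega
        rw [modeProdSq_comm I _ (Ne.symm hjd), ih j hlt]
  have horth : ∀ k : Fin (D + 1), ∀ W : (∀ d, Fin (I d)) → ℝ,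
      (∀ j : Fin D, j.castSucc < k → modeProdSq I W j (U j * (U j)ᵀ) = W) →
      tdot I A W = tdot I (Ahat k) W := by
    intro k
    induction k using Fin.induction with
    | zero => intro W _; rw [hA0]
    | succ d ih =>
      intro W hW
      rw [ih W fun j hj => hW j (hj.trans Fin.castSucc_lt_succ), hstep,
        tdot_modeProdSq_symm I _ _ d (hsym d), hW d Fin.castSucc_lt_succ]
  have hpyth : frobSq I (fun i => A i - Ahat (Fin.last D) i) =
      frobSq I A - frobSq I (Ahat (Fin.last D)) := by
    have h := horth (Fin.last D) (Ahat (Fin.last D)) (hrange _)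
    rw [frobSq_eq_tdot, tdot_sub_left, tdot_comm I A, tdot_comm I (Ahat _), tdot_sub_left,
      tdot_sub_left, tdot_comm I (Ahat _) A, h, frobSq_eq_tdot, frobSq_eq_tdot]
    ring
  have htel : ∀ k : Fin (D + 1),
      frobSq I A - frobSq I (Ahat k) ≤ (k : ℕ) * (ε ^ 2 * frobSq I A / D) := by
    intro k
    induction k using Fin.induction with
    | zero => simp [hA0]
    | succ d ih =>
      have h := frobSq_sub_truncation I (Ahat d.castSucc) d (hSr d) (Ufull d) (hUorth d) (σ d)
        (hgram d) (U d) (hU d)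
      rw [← hstep] at h
      have h2 := htrunc d
      rw [← h] at h2
      simp only [Fin.val_castSucc] at ih
      rw [Fin.val_succ, Nat.cast_succ]
      linarith
  have hbound : frobSq I (fun i => A i - Ahat (Fin.last D) i) ≤ ε ^ 2 * frobSq I A := by
    have h := htel (Fin.last D)
    rw [← hpyth, Fin.val_last] at h
    refine h.trans ?_
    -- for `D = 0` the left-hand side is the junk value `0 * (_ / 0) = 0`
    rcases Nat.eq_zero_or_pos D with h0 | h0
    · have : (D : ℝ) = 0 := by exact_mod_cast h0
      rw [this, zero_mul]
      exact mul_nonneg (sq_nonneg _) (frobSq_nonneg _ _)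
    · have : (D : ℝ) ≠ 0 := by exact_mod_cast h0.ne'
      rw [mul_div_cancel₀ _ this]
  calc Real.sqrt (frobSq I (fun i => A i - Ahat (Fin.last D) i))
      ≤ Real.sqrt (ε ^ 2 * frobSq I A) := Real.sqrt_le_sqrt hbound
    _ = ε * Real.sqrt (frobSq I A) := by
      rw [Real.sqrt_mul (sq_nonneg _), Real.sqrt_sq hε.le]
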